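/- Let Ω ⊂ ℝ^d be convex and λ > 0. If φ : Ω → ℝ is λ-Lipschitz, then its Huber-cost transform equals its quadratic-cost transform: φ^{c_{2,λ}}(x) = φ^{c₂}(x) for all x ∈ Ω. -/

import Mathlib

/-!
The Huber cost lies below the quadratic one, so the Huber transform is at most the quadratic
transform. Conversely, when `|x - y| > λ`, the point `z` of the segment `[x, y]` at distance `λ`
from `x` lies in `Ω` by convexity, and the Lipschitz bound `φ y - φ z ≤ λ (|x - y| - λ)` gives
`c₂ x z - φ z ≤ c_{2,λ} x y - φ y`: the quadratic cost at `z` does at least as well as the Huber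
cost at `y` (`exists_c2_sub_le_huber_sub`). Since the infima are real-valued, the argument also
needs `y ↦ c_{2,λ} x y - φ y` to be bounded below on `Ω`; this follows from
`c_{2,λ} x y ≥ λ |x - y| - λ² / 2` and the Lipschitz bound between `x` and `y`.
-/

open MeasureTheory Filter Topology

noncomputable section

abbrev Ed (d : ℕ) := EuclideanSpace ℝ (Fin d)

variable {d : ℕ}

/-- `γ` is a coupling (transport plan) between `μ` and `ν`. -/
def IsCoupling (μ ν : Measure (Ed d)) (γ : Measure (Ed d × Ed d)) : Prop :=
  γ.map Prod.fst = μ ∧ γ.map Prod.snd = ν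

/-- The optimal transport cost `𝓘_c(μ,ν)` for the pointwise cost `c`. -/
def tCost (c : Ed d → Ed d → ℝ) (μ ν : Measure (Ed d)) : ℝ :=
  sInf {r | ∃ γ : Measure (Ed d × Ed d), IsCoupling μ ν γ ∧ r = ∫ p, c p.1 p.2 ∂γ}

/-- The Wasserstein-1 distance. -/
def W1 (μ ν : Measure (Ed d)) : ℝ := tCost (fun x y => ‖x - y‖) μ ν

/-- The squared Wasserstein-2 distance `W₂²(μ,ν)`. -/
def W2sq (μ ν : Measure (Ed d)) : ℝ := tCost (fun x y => ‖x - y‖ ^ 2) μ ν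

/-- The quadratic cost `c₂(x,y) = |x-y|²/2`. -/
def c2 (x y : Ed d) : ℝ := ‖x - y‖ ^ 2 / 2

/-- The Huber cost `c_{2,λ}`. -/
def huber (lam : ℝ) (x y : Ed d) : ℝ :=
  if ‖x - y‖ ≤ lam then ‖x - y‖ ^ 2 / 2 else lam * ‖x - y‖ - lam ^ 2 / 2

/-- The `c`-transform on `Ω`: `φ^c(x) = inf_{y ∈ Ω} c(x,y) - φ(y)`. -/
def ctrans (c : Ed d → Ed d → ℝ) (Ω : Set (Ed d)) (φ : Ed d → ℝ) (x : Ed d) : ℝ :=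
  sInf ((fun y => c x y - φ y) '' Ω)

/-- A Borel probability measure concentrated on `Ω`. -/
def ProbOn (Ω : Set (Ed d)) (μ : Measure (Ed d)) : Prop :=
  IsProbabilityMeasure μ ∧ μ Ωᶜ = 0

/-- `γ` is an optimal transport plan between `μ` and `ν` for cost `c`. -/
def IsOptimalPlan (c : Ed d → Ed d → ℝ) (μ ν : Measure (Ed d))
    (γ : Measure (Ed d × Ed d)) : Prop :=
  IsCoupling μ ν γ ∧ ∀ γ' : Measure (Ed d × Ed d), IsCoupling μ ν γ' →
    ∫ p, c p.1 p.2 ∂γ ≤ ∫ p, c p.1 p.2 ∂γ'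

/-- `T` is an optimal transport map from `μ` to `ν` for cost `c`. -/
def IsOptimalMap (c : Ed d → Ed d → ℝ) (μ ν : Measure (Ed d)) (T : Ed d → Ed d) : Prop :=
  AEMeasurable T μ ∧ μ.map T = ν ∧
    ∀ γ : Measure (Ed d × Ed d), IsCoupling μ ν γ →
      ∫ x, c x (T x) ∂μ ≤ ∫ p, c p.1 p.2 ∂γ

/-- The WROF functional `(1/2) W₂²(μ,ρ) + λ W₁(ρ,ν)`. -/
def wrof (lam : ℝ) (μ ν ρ : Measure (Ed d)) : ℝ := W2sq μ ρ / 2 + lam * W1 ρ ν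

/-- `ρ ∈ B_λ(μ)`: there exists an optimal plan for the Huber cost `c_{2,λ}` from `μ` to `ρ`
supported in `{|x-y| ≤ λ}`. -/
def Bset (lam : ℝ) (μ ρ : Measure (Ed d)) : Prop :=
  ∃ γ : Measure (Ed d × Ed d), IsOptimalPlan (huber lam) μ ρ γ ∧
    γ {p : Ed d × Ed d | lam < ‖p.1 - p.2‖} = 0

/-- `φ` solves the dual problem `sup_{φ ∈ λ-Lip(Ω)} ∫ φ^{c₂} dμ + ∫ φ dν`. -/
def DualSol (Ω : Set (Ed d)) (lam : ℝ) (μ ν : Measure (Ed d)) (φ : Ed d → ℝ) : Prop :=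
  LipschitzOnWith (Real.toNNReal lam) φ Ω ∧
    ∀ ψ : Ed d → ℝ, LipschitzOnWith (Real.toNNReal lam) ψ Ω →
      (∫ x, ctrans c2 Ω ψ x ∂μ) + ∫ x, ψ x ∂ν ≤ (∫ x, ctrans c2 Ω φ x ∂μ) + ∫ x, φ x ∂ν

/-- `φ ∈ ∂((1/2)W₂²(·,μ))(ρ)`, i.e. `φ ∈ C(Ω)` with `∫φ^{c₂}dμ + ∫φ dρ = (1/2)W₂²(ρ,μ)`. -/
def InSubdiffW2 (Ω : Set (Ed d)) (μ ρ : Measure (Ed d)) (φ : Ed d → ℝ) : Prop :=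
  ContinuousOn φ Ω ∧ (∫ x, ctrans c2 Ω φ x ∂μ) + ∫ x, φ x ∂ρ = W2sq ρ μ / 2

/-- The divergence `D_λ(ν,ρ)` with reference measure `μ`. -/
def Dlam (Ω : Set (Ed d)) (lam : ℝ) (μ ν ρ : Measure (Ed d)) : EReal :=
  ((W2sq ν μ / 2 : ℝ) : EReal) - ((W2sq ρ μ / 2 : ℝ) : EReal) -
    ⨆ φ ∈ {φ : Ed d → ℝ | InSubdiffW2 Ω μ ρ φ ∧ LipschitzOnWith (Real.toNNReal lam) φ Ω},
      (((∫ x, φ x ∂ν) - ∫ x, φ x ∂ρ : ℝ) : EReal)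

/-- `φ` is `c`-concave on `Ω`: `φ = ψ^c` for some `ψ`. -/
def CConcaveOn (c : Ed d → Ed d → ℝ) (Ω : Set (Ed d)) (φ : Ed d → ℝ) : Prop :=
  ∃ ψ : Ed d → ℝ, ∀ x ∈ Ω, φ x = ctrans c Ω ψ x

/-- The (topological) support of a measure. -/
def msupport {α : Type*} [TopologicalSpace α] [MeasurableSpace α] (γ : Measure α) : Set α :=
  {p | ∀ U : Set α, IsOpen U → p ∈ U → γ U ≠ 0}

theorem huber_le_c2 (lam : ℝ) (x y : Ed d) : huber lam x y ≤ c2 x y := by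
  unfold huber c2
  split_ifs
  · exact le_rfl
  · nlinarith [sq_nonneg (‖x - y‖ - lam)]

theorem mul_norm_sub_le_huber (lam : ℝ) (x y : Ed d) :
    lam * ‖x - y‖ - lam ^ 2 / 2 ≤ huber lam x y := by
  unfold huber
  split_ifs
  · nlinarith [sq_nonneg (‖x - y‖ - lam)]
  · exact le_rfl

theorem sub_le_mul_norm_of_lipschitzOn {Ω : Set (Ed d)} {lam : ℝ} (hlam : 0 < lam)
    {φ : Ed d → ℝ} (hφ : LipschitzOnWith (Real.toNNReal lam) φ Ω) {y z : Ed d}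
    (hy : y ∈ Ω) (hz : z ∈ Ω) : φ y - φ z ≤ lam * ‖z - y‖ := by
  have h := hφ.dist_le_mul y hy z hz
  rw [Real.coe_toNNReal _ hlam.le, Real.dist_eq, dist_comm, dist_eq_norm] at h
  exact (le_abs_self _).trans h

/-- Moving `y` towards `x` until it is within distance `λ` makes the quadratic cost competitive
with the Huber cost at the original `y`. -/
theorem exists_c2_sub_le_huber_sub {Ω : Set (Ed d)} (hΩ : Convex ℝ Ω) {lam : ℝ} (hlam : 0 < lam)
    {φ : Ed d → ℝ} (hφ : LipschitzOnWith (Real.toNNReal lam) φ Ω) {x y : Ed d}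
    (hx : x ∈ Ω) (hy : y ∈ Ω) : ∃ z ∈ Ω, c2 x z - φ z ≤ huber lam x y - φ y := by
  by_cases h : ‖x - y‖ ≤ lam
  · exact ⟨y, hy, by simp [huber, c2, h]⟩
  · have hr : 0 < ‖x - y‖ := hlam.trans (not_le.mp h)
    set t : ℝ := lam / ‖x - y‖ with ht
    have ht0 : 0 ≤ t := by positivity
    have ht1 : t ≤ 1 := (div_le_one hr).mpr (not_le.mp h).le
    have htr : t * ‖x - y‖ = lam := by rw [ht]; field_simp
    have hz : (1 - t) • x + t • y ∈ Ω := hΩ hx hy (by linarith) ht0 (by ring)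
    refine ⟨_, hz, ?_⟩
    have hxz : ‖x - ((1 - t) • x + t • y)‖ = lam := by
      rw [show x - ((1 - t) • x + t • y) = t • (x - y) by module, norm_smul,
        Real.norm_of_nonneg ht0, htr]
    have hzy : ‖((1 - t) • x + t • y) - y‖ = ‖x - y‖ - lam := by
      rw [show ((1 - t) • x + t • y) - y = (1 - t) • (x - y) by module, norm_smul,
        Real.norm_of_nonneg (by linarith), sub_mul, htr, one_mul]
    have hL := sub_le_mul_norm_of_lipschitzOn hlam hφ hy hz
    rw [hzy] at hL
    simp only [c2, huber, hxz, if_neg h]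
    nlinarith

/-- Let `Ω ⊂ ℝ^d` be convex and `λ > 0`. If `φ : Ω → ℝ` is `λ`-Lipschitz,
then its Huber-cost transform equals its quadratic-cost transform on `Ω`:
`φ^{c_{2,λ}}(x) = φ^{c₂}(x)` for all `x ∈ Ω`. -/
theorem stmt7 (d : ℕ) (Ω : Set (Ed d)) (hΩconv : Convex ℝ Ω)
    (lam : ℝ) (hlam : 0 < lam)
    (φ : Ed d → ℝ) (hφ : LipschitzOnWith (Real.toNNReal lam) φ Ω) :
    ∀ x ∈ Ω, ctrans (huber lam) Ω φ x = ctrans c2 Ω φ x := by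
  intro x hx
  have hbdd : BddBelow ((fun y => huber lam x y - φ y) '' Ω) := by
    refine ⟨-φ x - lam ^ 2 / 2, ?_⟩
    rintro _ ⟨y, hy, rfl⟩
    have h₁ := mul_norm_sub_le_huber lam x y
    have h₂ := sub_le_mul_norm_of_lipschitzOn hlam hφ hy hx
    simp only
    linarith
  have hle : ∀ y, huber lam x y - φ y ≤ c2 x y - φ y := fun y =>
    sub_le_sub_right (huber_le_c2 lam x y) _
  have hbdd₂ : BddBelow ((fun y => c2 x y - φ y) '' Ω) := by
    obtain ⟨m, hm⟩ := hbdd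
    refine ⟨m, ?_⟩
    rintro _ ⟨y, hy, rfl⟩
    exact (hm ⟨y, hy, rfl⟩).trans (hle y)
  unfold ctrans
  apply le_antisymm
  · refine le_csInf ⟨_, x, hx, rfl⟩ ?_
    rintro _ ⟨y, hy, rfl⟩
    exact (csInf_le hbdd ⟨y, hy, rfl⟩).trans (hle y)
  · refine le_csInf ⟨_, x, hx, rfl⟩ ?_
    rintro _ ⟨y, hy, rfl⟩
    obtain ⟨z, hz, hzy⟩ := exists_c2_sub_le_huber_sub hΩconv hlam hφ hx hy
    exact (csInf_le hbdd₂ ⟨z, hz, rfl⟩).trans hzy
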